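/- arXiv:1104.4742 — 2 statements merged into one kernel-verified Lean document; each statement's English description precedes it below -/
import Mathlib

section
/- For all real λ > 0 and β ≥ 0, the quantity 𝔅(t,λ,0,β)/t − t·λ³/(β+λ) tends to 2βλ²/(β+λ)² as t → ∞. -/
open MeasureTheory Real Filter

/-- The quantity 𝔅(t,λ,Θ,Δ) from the paper. -/
noncomputable def frakB (t lam Θ Δ : ℝ) : ℝ :=
  lam ^ 2 *
    ∫ y in (0:ℝ)..t,
      Real.exp (-((lam + Θ) * y)) *
        ∫ v in (0:ℝ)..(t - y),
          Real.exp (-((lam + Δ) * v)) * ((lam * (t - y - v) + 2) ^ 2 - 2)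

/-!
With `(E_k g)(t) = ∫₀ᵗ exp(-k y) g(t - y) dy`, the double integral is `E_{λ+Θ} (E_{λ+Δ} p)` for a
quadratic polynomial `p`. Since `E_k g` is the solution of `u' + k u = g`, `u(0) = 0`, and, for
`k > 0`, a bounded change of `g` changes it by a bounded amount, `E_k` maps `a t² + b t + O(1)` to
`α t² + γ t + O(1)` with `k α = a` and `k γ + 2 α = b`. The limit is read off from the linear
coefficient after two such steps.
-/

/-- The convolution over `[0, t]` of `g` with the exponential kernel `y ↦ exp (-k y)`; as a
function of `t`, the solution of `u' + k u = g` with `u 0 = 0`. -/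
noncomputable def expConv (k : ℝ) (g : ℝ → ℝ) (t : ℝ) : ℝ :=
  ∫ y in (0 : ℝ)..t, exp (-(k * y)) * g (t - y)

/-- `g t = a t² + b t + O(1)`, with the error bounded on the whole half-line `t ≥ 0` rather than
only for large `t`, because `expConv k g t` depends on all values of `g` on `[0, t]`. -/
def IsQuadraticModBounded (g : ℝ → ℝ) (a b : ℝ) : Prop :=
  ∃ M, ∀ t, 0 ≤ t → |g t - (a * t ^ 2 + b * t)| ≤ M

section ExpConv

variable {k M t : ℝ} {f f' g h : ℝ → ℝ}

lemma continuous_expConv (hg : Continuous g) : Continuous (expConv k g) :=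
  intervalIntegral.continuous_parametric_intervalIntegral_of_continuous (by fun_prop) continuous_id

lemma expConv_sub (hg : Continuous g) (hh : Continuous h) :
    expConv k (fun s => g s - h s) t = expConv k g t - expConv k h t := by
  simp only [expConv, mul_sub]
  exact intervalIntegral.integral_sub (Continuous.intervalIntegrable (by fun_prop) _ _)
    (Continuous.intervalIntegrable (by fun_prop) _ _)

lemma expConv_mul_add_deriv (hf : ∀ s, HasDerivAt f (f' s) s) (hf' : Continuous f') :
    expConv k (fun s => k * f s + f' s) t = f t - exp (-(k * t)) * f 0 := by
  have hcont : Continuous f := continuous_iff_continuousAt.2 fun s => (hf s).continuousAt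
  have hderiv (y : ℝ) : HasDerivAt (fun y => -(exp (-(k * y)) * f (t - y)))
      (exp (-(k * y)) * (k * f (t - y) + f' (t - y))) y := by
    have hexp : HasDerivAt (fun y => exp (-(k * y))) (exp (-(k * y)) * -(k * 1)) y :=
      ((hasDerivAt_id y).const_mul k).neg.exp
    exact (hexp.mul ((hf (t - y)).comp_const_sub t y)).neg.congr_deriv (by ring)
  rw [expConv, intervalIntegral.integral_eq_sub_of_hasDerivAt (fun y _ => hderiv y)
    (Continuous.intervalIntegrable (by fun_prop) _ _)]
  simp only [sub_self, sub_zero, mul_zero, neg_zero, exp_zero]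
  ring

lemma expConv_const (hk : k ≠ 0) :
    expConv k (fun _ => M) t = M / k - exp (-(k * t)) * (M / k) := by
  simpa [mul_div_cancel₀ M hk] using
    expConv_mul_add_deriv (k := k) (t := t) (fun s => hasDerivAt_const s (M / k)) continuous_const

lemma abs_expConv_le (hk : 0 < k) (ht : 0 ≤ t) (hM : ∀ s ∈ Set.Icc 0 t, |h s| ≤ M) :
    |expConv k h t| ≤ M / k := by
  have hM_nonneg : 0 ≤ M := (abs_nonneg _).trans (hM 0 ⟨le_rfl, ht⟩)
  have hbound (y : ℝ) (hy : y ∈ Set.Ioc 0 t) :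
      ‖exp (-(k * y)) * h (t - y)‖ ≤ exp (-(k * y)) * M := by
    rw [norm_mul, norm_of_nonneg (exp_pos _).le]
    gcongr
    exact hM _ ⟨sub_nonneg.2 hy.2, sub_le_self t hy.1.le⟩
  calc |expConv k h t| ≤ expConv k (fun _ => M) t :=
        intervalIntegral.norm_integral_le_of_norm_le ht (.of_forall hbound)
          (Continuous.intervalIntegrable (by fun_prop) _ _)
    _ = M / k - exp (-(k * t)) * (M / k) := expConv_const hk.ne'
    _ ≤ M / k := sub_le_self _ (by positivity)

end ExpConv

namespace IsQuadraticModBounded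

variable {a b k : ℝ} {g : ℝ → ℝ}

lemma quadratic (a b c : ℝ) : IsQuadraticModBounded (fun s => a * s ^ 2 + b * s + c) a b :=
  ⟨|c|, by simp⟩

protected lemma expConv (hk : 0 < k) (hg : Continuous g) (h : IsQuadraticModBounded g a b) :
    IsQuadraticModBounded (expConv k g) (a / k) ((b - 2 * (a / k)) / k) := by
  obtain ⟨M, hM⟩ := h
  set α := a / k
  set γ := (b - 2 * α) / k with hγ
  have ha : k * α = a := mul_div_cancel₀ a hk.ne'
  have hb : k * γ + 2 * α = b := by rw [hγ, mul_div_cancel₀ _ hk.ne', sub_add_cancel]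
  have hderiv (s : ℝ) : HasDerivAt (fun s => α * s ^ 2 + γ * s) (2 * α * s + γ) s :=
    (((hasDerivAt_pow 2 s).const_mul α).add ((hasDerivAt_id s).const_mul γ)).congr_deriv
      (by norm_num; ring)
  refine ⟨(M + |γ|) / k, fun t ht => ?_⟩
  have hquad : expConv k (fun s => k * (α * s ^ 2 + γ * s) + (2 * α * s + γ)) t =
      α * t ^ 2 + γ * t := by
    simp [expConv_mul_add_deriv hderiv (by fun_prop)]
  rw [← hquad, ← expConv_sub hg (by fun_prop)]
  refine abs_expConv_le hk ht fun s hs => ?_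
  calc |g s - (k * (α * s ^ 2 + γ * s) + (2 * α * s + γ))|
      = |g s - (a * s ^ 2 + b * s) - γ| := by rw [← ha, ← hb]; ring_nf
    _ ≤ |g s - (a * s ^ 2 + b * s)| + |γ| := abs_sub _ _
    _ ≤ M + |γ| := by gcongr; exact hM s hs.1

lemma tendsto_div_sub_mul (h : IsQuadraticModBounded g a b) :
    Tendsto (fun t => g t / t - a * t) atTop (nhds b) := by
  obtain ⟨M, hM⟩ := h
  have herror : Tendsto (fun t => (g t - (a * t ^ 2 + b * t)) / t) atTop (nhds 0) :=
    tendsto_bdd_div_atTop_nhds_zero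
      ((eventually_ge_atTop 0).mono fun t ht => (abs_le.1 (hM t ht)).1)
      ((eventually_ge_atTop 0).mono fun t ht => (abs_le.1 (hM t ht)).2) tendsto_id
  have hsum := herror.add_const b
  rw [zero_add] at hsum
  refine hsum.congr' ?_
  filter_upwards [eventually_gt_atTop 0] with t ht
  field_simp
  ring

end IsQuadraticModBounded

lemma frakB_eq_expConv (t lam Θ Δ : ℝ) :
    frakB t lam Θ Δ = lam ^ 2 *
      expConv (lam + Θ) (expConv (lam + Δ) fun s => (lam * s + 2) ^ 2 - 2) t :=
  rfl

theorem stmt_10_general (lam Θ Δ : ℝ) (hΘ : 0 < lam + Θ) (hΔ : 0 < lam + Δ) :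
    Tendsto (fun t : ℝ => frakB t lam Θ Δ / t - t * lam ^ 4 / ((lam + Θ) * (lam + Δ))) atTop
      (nhds (2 * lam ^ 3 * (Θ / (lam + Θ) + Δ / (lam + Δ)) / ((lam + Θ) * (lam + Δ)))) := by
  have hcont : Continuous fun s : ℝ => (lam * s + 2) ^ 2 - 2 := by fun_prop
  have hweight : IsQuadraticModBounded (fun s => (lam * s + 2) ^ 2 - 2) (lam ^ 2) (4 * lam) := by
    convert IsQuadraticModBounded.quadratic (lam ^ 2) (4 * lam) 2 using 2
    ring
  have hquad := (hweight.expConv hΔ hcont).expConv hΘ (continuous_expConv hcont)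
  convert hquad.tendsto_div_sub_mul.const_mul (lam ^ 2) using 2
  · rw [frakB_eq_expConv]
    field_simp
  · field_simp
    ring

theorem stmt_10 (lam β : ℝ) (hlam : 0 < lam) (hβ : 0 ≤ β) :
    Tendsto (fun t : ℝ => frakB t lam 0 β / t - t * lam ^ 3 / (β + lam)) atTop
      (nhds (2 * β * lam ^ 2 / (β + lam) ^ 2)) := by
  rw [add_comm β lam]
  convert stmt_10_general lam 0 β (by linarith) (by linarith) using 2 <;>
    simp only [add_zero, zero_div, zero_add] <;> field_simp
end

section
/- Let n, i, j be natural numbers with 2 ≤ i, i+2 ≤ j ≤ n, let t ≥ 0, and let f, g : ℝ → [0,∞] be Borel measurable. Then (n!/((i−2)!·(j−i−2)!·(n−j)!)) · ∫₀ᵗ ∫₀^{t−x} ∫_{x+u}^{t} ∫₀^{t−w} f(u)·g(v)·x^{i−2}·(w−x−u)^{j−i−2}·(t−w−v)^{n−j} dv dw du dx = n·(n−1) · ∫₀ᵗ ∫₀^{t−u} f(u)·g(v)·(t−u−v)^{n−2} dv du, where both sides are computed as Lebesgue integrals of nonnegative functions (values in [0,∞] allowed) and the third integral on the left is over w ∈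 [x+u, t]. -/
open MeasureTheory Real ENNReal

/-!
By Tonelli, the left-hand integral may be taken with `u` and `v` outermost. For fixed `u` and `v`
the integral over `x` and `w` is a Dirichlet integral of total length `s = t - u - v`, with value
`a! b! c! / (a + b + c + 2)! * s ^ (a + b + c + 2)` for the exponents `a`, `b`, `c` of the
three gaps; here `a + b + c + 2 = n - 2`. It comes from integrating out `w` and then `x`, each time
by the Beta integral.
-/

open Set Function
open scoped Nat

section Tonelli

variable {α β : Type*} [MeasurableSpace α] [MeasurableSpace β] {μ : Measure α} {ν : Measure β}

lemma setLIntegral_setLIntegral_eq_lintegral_indicator {R : Set (α × β)} {s : Set α}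
    {s' : α → Set β} (hR : MeasurableSet R) (hs : MeasurableSet s)
    (h : ∀ x y, (x, y) ∈ R ↔ x ∈ s ∧ y ∈ s' x) (f : α → β → ℝ≥0∞) :
    ∫⁻ x in s, ∫⁻ y in s' x, f x y ∂ν ∂μ = ∫⁻ x, ∫⁻ y, R.indicator (uncurry f) (x, y) ∂ν ∂μ := by
  rw [← lintegral_indicator hs]
  refine lintegral_congr fun x ↦ ?_
  by_cases hx : x ∈ s
  · have section_eq : Prod.mk x ⁻¹' R = s' x := by ext y; simp [h, hx]
    rw [indicator_of_mem hx, ← section_eq, ← lintegral_indicator (measurable_prodMk_left hR)]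
    rfl
  · simp [h, hx]

lemma setLIntegral_setLIntegral_swap [SFinite μ] [SFinite ν] {R : Set (α × β)}
    {s : Set α} {s' : α → Set β} {t : Set β} {t' : β → Set α}
    (hR : MeasurableSet R) (hs : MeasurableSet s) (ht : MeasurableSet t)
    (hRs : ∀ x y, (x, y) ∈ R ↔ x ∈ s ∧ y ∈ s' x) (hRt : ∀ x y, (x, y) ∈ R ↔ y ∈ t ∧ x ∈ t' y)
    {f : α → β → ℝ≥0∞} (hf : AEMeasurable (uncurry f) (μ.prod ν)) :
    ∫⁻ x in s, ∫⁻ y in s' x, f x y ∂ν ∂μ = ∫⁻ y in t, ∫⁻ x in t' y, f x y ∂μ ∂ν := by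
  rw [setLIntegral_setLIntegral_eq_lintegral_indicator hR hs hRs,
    setLIntegral_setLIntegral_eq_lintegral_indicator (measurable_swap hR) ht
      (fun y x ↦ hRt x y) (fun y x ↦ f x y)]
  exact lintegral_lintegral_swap (hf.indicator hR)

lemma measurable_setLIntegral_Ioc {a b : α → ℝ} {f : α → ℝ → ℝ≥0∞} (ha : Measurable a)
    (hb : Measurable b) (hf : Measurable (uncurry f)) :
    Measurable fun x ↦ ∫⁻ y in Ioc (a x) (b x), f x y := by
  have hR : MeasurableSet {p : α × ℝ | a p.1 < p.2 ∧ p.2 ≤ b p.1} :=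
    (measurableSet_lt (by fun_prop) measurable_snd).inter
      (measurableSet_le measurable_snd (by fun_prop))
  simp_rw [← lintegral_indicator measurableSet_Ioc]
  exact (hf.indicator hR).lintegral_prod_right'

lemma lintegral_triangle_swap (a b t : ℝ) {f : ℝ → ℝ → ℝ≥0∞} (hf : Measurable (uncurry f)) :
    ∫⁻ x in Ioc a (t - b), ∫⁻ y in Ioc b (t - x), f x y =
      ∫⁻ y in Ioc b (t - a), ∫⁻ x in Ioc a (t - y), f x y := by
  have hR : MeasurableSet {p : ℝ × ℝ | a < p.1 ∧ b < p.2 ∧ p.1 + p.2 ≤ t} := by measurability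
  refine setLIntegral_setLIntegral_swap hR measurableSet_Ioc measurableSet_Ioc ?_ ?_
    hf.aemeasurable <;> grind

lemma lintegral_simplex_swap (t : ℝ) {F : ℝ → ℝ → ℝ → ℝ → ℝ≥0∞}
    (hF : Measurable fun p : ℝ × ℝ × ℝ × ℝ ↦ F p.1 p.2.1 p.2.2.1 p.2.2.2) :
    ∫⁻ x in Ioc 0 t, ∫⁻ u in Ioc 0 (t - x), ∫⁻ w in Ioc (x + u) t, ∫⁻ v in Ioc 0 (t - w),
        F x u w v =
      ∫⁻ u in Ioc 0 t, ∫⁻ v in Ioc 0 (t - u), ∫⁻ x in Ioc 0 (t - u - v),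
        ∫⁻ w in Ioc (x + u) (t - v), F x u w v := by
  have comp {α : Type} [MeasurableSpace α] {x u w v : α → ℝ} (hx : Measurable x)
      (hu : Measurable u) (hw : Measurable w) (hv : Measurable v) :
      Measurable fun p ↦ F (x p) (u p) (w p) (v p) :=
    hF.comp (hx.prodMk (hu.prodMk (hw.prodMk hv)))
  have swap_w_v (x u : ℝ) : ∫⁻ w in Ioc (x + u) t, ∫⁻ v in Ioc 0 (t - w), F x u w v =
      ∫⁻ v in Ioc 0 (t - x - u), ∫⁻ w in Ioc (x + u) (t - v), F x u w v := by
    simpa [sub_sub] using lintegral_triangle_swap (x + u) 0 t (f := F x u)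
      (comp measurable_const measurable_const measurable_fst measurable_snd)
  have swap_x_u : ∫⁻ x in Ioc 0 t, ∫⁻ u in Ioc 0 (t - x), ∫⁻ v in Ioc 0 (t - x - u),
        ∫⁻ w in Ioc (x + u) (t - v), F x u w v =
      ∫⁻ u in Ioc 0 t, ∫⁻ x in Ioc 0 (t - u), ∫⁻ v in Ioc 0 (t - u - x),
        ∫⁻ w in Ioc (x + u) (t - v), F x u w v := by
    have inner_measurable : Measurable (uncurry fun x u ↦ ∫⁻ v in Ioc 0 (t - x - u),
        ∫⁻ w in Ioc (x + u) (t - v), F x u w v) :=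
      measurable_setLIntegral_Ioc (by fun_prop) (by fun_prop) <|
        measurable_setLIntegral_Ioc (by fun_prop) (by fun_prop) <|
          comp (by fun_prop) (by fun_prop) (by fun_prop) (by fun_prop)
    simpa [sub_right_comm] using lintegral_triangle_swap 0 0 t inner_measurable
  have swap_x_v (u : ℝ) : ∫⁻ x in Ioc 0 (t - u), ∫⁻ v in Ioc 0 (t - u - x),
        ∫⁻ w in Ioc (x + u) (t - v), F x u w v =
      ∫⁻ v in Ioc 0 (t - u), ∫⁻ x in Ioc 0 (t - u - v), ∫⁻ w in Ioc (x + u) (t - v),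
        F x u w v := by
    have inner_measurable : Measurable (uncurry fun x v ↦ ∫⁻ w in Ioc (x + u) (t - v), F x u w v) :=
      measurable_setLIntegral_Ioc (by fun_prop) (by fun_prop) <|
        comp (by fun_prop) (by fun_prop) (by fun_prop) (by fun_prop)
    simpa using lintegral_triangle_swap 0 0 (t - u) inner_measurable
  simp_rw [swap_w_v, swap_x_u, swap_x_v]

end Tonelli

section Dirichlet

lemma integral_pow_mul_sub_pow (a b : ℕ) {s : ℝ} (hs : 0 ≤ s) :
    ∫ x in 0..s, x ^ a * (s - x) ^ b = a ! * b ! / (a + b + 1)! * s ^ (a + b + 1) := by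
  rcases hs.eq_or_lt with rfl | hs
  · simp
  have beta_eq : Complex.betaIntegral (a + 1) (b + 1) = a ! * b ! / (a + b + 1)! := by
    rw [Complex.betaIntegral_eq_Gamma_mul_div _ _ (by simpa using Nat.cast_add_one_pos a)
        (by simpa using Nat.cast_add_one_pos b),
      Complex.Gamma_nat_eq_factorial, Complex.Gamma_nat_eq_factorial,
      ← Complex.Gamma_nat_eq_factorial (a + b + 1)]
    push_cast
    ring_nf
  have scaled := Complex.betaIntegral_scaled (a + 1) (b + 1) hs
  rw [beta_eq, show (a + 1 + (b + 1) - 1 : ℂ) = (a + b + 1 : ℕ) by push_cast; ring] at scaled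
  simp only [add_sub_cancel_right, Complex.cpow_natCast] at scaled
  rw [mul_comm, ← Complex.ofReal_inj, ← intervalIntegral.integral_ofReal]
  push_cast
  exact scaled

lemma lintegral_sub_pow_mul_sub_pow (a b : ℕ) {y z : ℝ} (hyz : y ≤ z) :
    ∫⁻ w in Ioc y z, ENNReal.ofReal ((w - y) ^ a * (z - w) ^ b) =
      ENNReal.ofReal (a ! * b ! / (a + b + 1)! * (z - y) ^ (a + b + 1)) := by
  have nonneg : 0 ≤ᵐ[volume.restrict (Ioc y z)] fun w ↦ (w - y) ^ a * (z - w) ^ b := by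
    filter_upwards [ae_restrict_mem measurableSet_Ioc] with w hw
    exact mul_nonneg (pow_nonneg (sub_nonneg.2 hw.1.le) a) (pow_nonneg (sub_nonneg.2 hw.2) b)
  rw [← ofReal_integral_eq_lintegral_ofReal (Continuous.integrableOn_Ioc (by fun_prop)) nonneg,
    ← intervalIntegral.integral_of_le hyz, ← integral_pow_mul_sub_pow a b (sub_nonneg.2 hyz)]
  congr 1
  simpa using intervalIntegral.integral_comp_sub_right (a := y) (b := z)
    (fun x ↦ x ^ a * (z - y - x) ^ b) y

lemma lintegral_dirichlet (a b c : ℕ) {u z : ℝ} (huz : u ≤ z) :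
    ∫⁻ x in Ioc 0 (z - u), ∫⁻ w in Ioc (x + u) z,
        ENNReal.ofReal (x ^ a * (w - x - u) ^ b * (z - w) ^ c) =
      ENNReal.ofReal (a ! * b ! * c ! / (a + b + c + 2)! * (z - u) ^ (a + b + c + 2)) := by
  have integrate_w {x : ℝ} (hx : x ∈ Ioc 0 (z - u)) :
      ∫⁻ w in Ioc (x + u) z, ENNReal.ofReal (x ^ a * (w - x - u) ^ b * (z - w) ^ c) =
        ENNReal.ofReal (b ! * c ! / (b + c + 1)!) *
          ENNReal.ofReal ((x - 0) ^ a * (z - u - x) ^ (b + c + 1)) := by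
    simp_rw [mul_assoc, ENNReal.ofReal_mul (pow_nonneg hx.1.le a), sub_sub _ x u]
    rw [lintegral_const_mul _ (by fun_prop),
      lintegral_sub_pow_mul_sub_pow b c (by linarith [hx.2]),
      ← ENNReal.ofReal_mul (pow_nonneg hx.1.le a), ← ENNReal.ofReal_mul (by positivity)]
    ring_nf
  rw [setLIntegral_congr_fun measurableSet_Ioc fun x hx ↦ integrate_w hx,
    lintegral_const_mul _ (by fun_prop),
    lintegral_sub_pow_mul_sub_pow a (b + c + 1) (sub_nonneg.2 huz),
    ← ENNReal.ofReal_mul (by positivity), sub_zero,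
    show a + (b + c + 1) + 1 = a + b + c + 2 by ring]
  field_simp

end Dirichlet

lemma lintegral_mul_dirichlet (a b c : ℕ) (t : ℝ) {h : ℝ → ℝ → ℝ≥0∞}
    (hh : Measurable (uncurry h)) :
    ∫⁻ x in Ioc 0 t, ∫⁻ u in Ioc 0 (t - x), ∫⁻ w in Ioc (x + u) t, ∫⁻ v in Ioc 0 (t - w),
        h u v * ENNReal.ofReal (x ^ a * (w - x - u) ^ b * (t - w - v) ^ c) =
      ENNReal.ofReal (a ! * b ! * c ! / (a + b + c + 2)!) *
        ∫⁻ u in Ioc 0 t, ∫⁻ v in Ioc 0 (t - u),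
          h u v * ENNReal.ofReal ((t - u - v) ^ (a + b + c + 2)) := by
  rw [lintegral_simplex_swap t (by fun_prop), ← lintegral_const_mul' _ _ ofReal_ne_top]
  refine lintegral_congr fun u ↦ ?_
  rw [← lintegral_const_mul' _ _ ofReal_ne_top]
  refine setLIntegral_congr_fun measurableSet_Ioc fun v hv ↦ ?_
  have integrand_measurable (x : ℝ) : Measurable fun w ↦
      ENNReal.ofReal (x ^ a * (w - x - u) ^ b * (t - v - w) ^ c) := by fun_prop
  have inner_measurable : Measurable fun x ↦ ∫⁻ w in Ioc (x + u) (t - v),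
      ENNReal.ofReal (x ^ a * (w - x - u) ^ b * (t - v - w) ^ c) :=
    measurable_setLIntegral_Ioc (by fun_prop) (by fun_prop) (by fun_prop)
  simp_rw [sub_right_comm t _ v, lintegral_const_mul (h u v) (integrand_measurable _)]
  rw [lintegral_const_mul _ inner_measurable, lintegral_dirichlet a b c (by linarith [hv.2]),
    ENNReal.ofReal_mul (by positivity), mul_left_comm]

lemma factorial_div_mul_ofReal_div {n d : ℕ} (hn : 2 ≤ n) (hd : 0 < d) :
    (n ! : ℝ≥0∞) / d * ENNReal.ofReal (d / (n - 2)!) = n * (n - 1 : ℕ) := by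
  have factorial_eq : n ! = n * (n - 1) * (n - 2)! := by
    rw [mul_assoc, ← Nat.sub_sub n 1 1, Nat.mul_factorial_pred (by omega),
      Nat.mul_factorial_pred (by omega)]
  rw [ENNReal.ofReal_div_of_pos (by positivity), ofReal_natCast, ofReal_natCast, ← mul_div_assoc,
    ENNReal.div_mul_cancel (by exact_mod_cast hd.ne') (natCast_ne_top d), factorial_eq]
  push_cast
  exact ENNReal.mul_div_cancel_right (by exact_mod_cast (n - 2).factorial_ne_zero)
    (natCast_ne_top _)

theorem stmt_17_general (n i j : ℕ) (hi : 2 ≤ i) (hij : i + 2 ≤ j) (hjn : j ≤ n) (t : ℝ)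
    {h : ℝ → ℝ → ℝ≥0∞} (hh : Measurable (uncurry h)) :
    ((n ! : ℝ≥0∞) / ((i - 2)! * (j - i - 2)! * (n - j)!)) *
        ∫⁻ x in Ioc 0 t, ∫⁻ u in Ioc 0 (t - x), ∫⁻ w in Ioc (x + u) t, ∫⁻ v in Ioc 0 (t - w),
          h u v * ENNReal.ofReal (x ^ (i - 2) * (w - x - u) ^ (j - i - 2) * (t - w - v) ^ (n - j)) =
      n * (n - 1 : ℕ) *
        ∫⁻ u in Ioc 0 t, ∫⁻ v in Ioc 0 (t - u), h u v * ENNReal.ofReal ((t - u - v) ^ (n - 2)) := by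
  have exponent_sum : i - 2 + (j - i - 2) + (n - j) + 2 = n - 2 := by omega
  have coefficient_eq :=
    factorial_div_mul_ofReal_div (d := (i - 2)! * (j - i - 2)! * (n - j)!)
      (show 2 ≤ n by omega) (by positivity)
  simp only [Nat.cast_mul] at coefficient_eq
  rw [lintegral_mul_dirichlet _ _ _ t hh, ← mul_assoc, exponent_sum, coefficient_eq]

theorem stmt_17 (n i j : ℕ) (hi : 2 ≤ i) (hij : i + 2 ≤ j) (hjn : j ≤ n)
    (t : ℝ) (ht : 0 ≤ t)
    (f g : ℝ → ℝ≥0∞) (hf : Measurable f) (hg : Measurable g) :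
    ((n.factorial : ℝ≥0∞) /
        ((i - 2).factorial * (j - i - 2).factorial * (n - j).factorial)) *
        ∫⁻ x in Set.Ioc (0:ℝ) t,
          ∫⁻ u in Set.Ioc (0:ℝ) (t - x),
            ∫⁻ w in Set.Ioc (x + u) t,
              ∫⁻ v in Set.Ioc (0:ℝ) (t - w),
                f u * g v *
                  ENNReal.ofReal
                    (x ^ (i - 2) * (w - x - u) ^ (j - i - 2) * (t - w - v) ^ (n - j))
      = (n : ℝ≥0∞) * (n - 1 : ℕ) *
          ∫⁻ u in Set.Ioc (0:ℝ) t,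
            ∫⁻ v in Set.Ioc (0:ℝ) (t - u),
              f u * g v * ENNReal.ofReal ((t - u - v) ^ (n - 2)) :=
  stmt_17_general n i j hi hij hjn t (by fun_prop)
end
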